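/- Assume the Goldberg–Seymour conjecture holds, i.e., every finite loopless multigraph H satisfies χ'(H) ≤ max{Δ(H)+1, ⌈Γ(H)⌉}. Then every finite loopless multigraph G satisfies: ξ(G) ≥ min{δ(G)−1, ⌊Φ(G)⌋} if Φ(G) is not an integer, and ξ(G) ≥ min{δ(G)−2, ⌊Φ(G)⌋−1} if Φ(G) is an integer. -/

import Mathlib

open Finset

variable {V E : Type} [Fintype V] [DecidableEq V] [Fintype E]

/-- A multigraph given by an incidence map `ends : E → Sym2 V` is loopless if no edge is a loop. -/
def Loopless (ends : E → Sym2 V) : Prop := ∀ e : E, ¬ (ends e).IsDiag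

/-- The degree of a vertex: the number of edges incident with it. -/
def mDegree (ends : E → Sym2 V) (v : V) : ℕ :=
  (univ.filter fun e => v ∈ ends e).card

/-- The minimum degree δ(G). -/
noncomputable def minDegree (ends : E → Sym2 V) : ℕ :=
  sInf (Set.range (mDegree ends))

/-- The maximum degree Δ(G). -/
noncomputable def maxDegree (ends : E → Sym2 V) : ℕ :=
  sSup (Set.range (mDegree ends))

/-- The maximum multiplicity μ(G) of an edge. -/
noncomputable def maxMultiplicity (ends : E → Sym2 V) : ℕ :=
  sSup (Set.range fun e : E => (univ.filter fun f : E => ends f = ends e).card)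

/-- `E(U)`: the set of edges with both ends in `U`. -/
def edgesIn (ends : E → Sym2 V) (U : Finset V) : Finset E :=
  univ.filter fun e => ∀ v ∈ ends e, v ∈ U

/-- `E⁺(U)`: the set of edges with at least one end in `U`. -/
def edgesPlus (ends : E → Sym2 V) (U : Finset V) : Finset E :=
  univ.filter fun e => ∃ v ∈ ends e, v ∈ U

/-- `F(U)`: the set of edges with exactly one end in `U`. -/
def edgesF (ends : E → Sym2 V) (U : Finset V) : Finset E :=
  univ.filter fun e => (∃ v ∈ ends e, v ∈ U) ∧ ¬ ∀ v ∈ ends e, v ∈ U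

/-- `E(X,Y)`: the set of edges with one end in `X` and the other end in `Y`. -/
def edgesBetween (ends : E → Sym2 V) (X Y : Finset V) : Finset E :=
  univ.filter fun e => ∃ x ∈ X, ∃ y ∈ Y, ends e = s(x, y)

/-- An odd set: a vertex set of odd size at least 3. -/
def IsOddSet (U : Finset V) : Prop := 3 ≤ U.card ∧ Odd U.card

/-- A proper edge coloring: each vertex is incident with at most one edge of each color. -/
def IsProperEdgeColoring (ends : E → Sym2 V) {k : ℕ} (c : E → Fin k) : Prop :=
  ∀ v : V, ∀ e f : E, v ∈ ends e → v ∈ ends f → c e = c f → e = f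

/-- The chromatic index χ'(G). -/
noncomputable def chromaticIndex (ends : E → Sym2 V) : ℕ :=
  sInf {k : ℕ | ∃ c : E → Fin k, IsProperEdgeColoring ends c}

/-- A cover coloring: each vertex is incident with at least one edge of each color. -/
def IsCoverColoring (ends : E → Sym2 V) {k : ℕ} (c : E → Fin k) : Prop :=
  ∀ (v : V) (i : Fin k), ∃ e : E, v ∈ ends e ∧ c e = i

/-- The cover index ξ(G). -/
noncomputable def coverIndex (ends : E → Sym2 V) : ℕ :=
  sSup {k : ℕ | ∃ c : E → Fin k, IsCoverColoring ends c}

/-- The density Γ(G) = max over odd sets U of 2|E(U)|/(|U|-1). -/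
noncomputable def density (ends : E → Sym2 V) : ℝ :=
  sSup {x : ℝ | ∃ U : Finset V, IsOddSet U ∧
    x = 2 * (edgesIn ends U).card / ((U.card : ℝ) - 1)}

/-- The co-density Φ(G) = min over odd sets U of 2|E⁺(U)|/(|U|+1). -/
noncomputable def codensity (ends : E → Sym2 V) : ℝ :=
  sInf {x : ℝ | ∃ U : Finset V, IsOddSet U ∧
    x = 2 * (edgesPlus ends U).card / ((U.card : ℝ) + 1)}

/-!
View a multigraph as a hypergraph with edges of size at most two, and let `k < δ` and `k < Φ`, that
is, `|E⁺(U)| > k (|U| + 1) / 2` for every `U` of odd size. Detach edges from their ends as long as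
this bound survives. By an uncrossing argument on the sets where it is tight, all degrees are then
`k + 1`. Attaching a new vertex in place of each missing end gives a loopless multigraph with
`Δ + 1 ≤ k + 2` and `Γ ≤ k + 2`, which has a proper `(k + 2)`-edge-coloring by the Goldberg–Seymour
conjecture. Each old vertex misses just one color, so it is on spare edges of the last two colors
whenever it misses one of the first `k`. As an edge has at most two ends, Hall's theorem assigns to
every such vertex a spare edge of its own, which is recolored with the missing color.
-/

section Hypergraph

variable {α ι : Type*} [DecidableEq α] [Fintype ι] {k : ℕ} {I : ι → Finset α} {U T : Finset α}

/-- The degree of a vertex in a hypergraph, given as the family `I` of the vertex sets of its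
edges. -/
def incidenceDegree (I : ι → Finset α) (v : α) : ℕ :=
  #{e | v ∈ I e}

/-- The analogue of `E⁺(U)` for a hypergraph: the set of edges that meet `U`. -/
def edgesMeeting (I : ι → Finset α) (U : Finset α) : Finset ι :=
  {e | ∃ v ∈ I e, v ∈ U}

/-- A hypergraph is `k`-cover-dense if `|E⁺(U)| > k (|U| + 1) / 2` for every `U` of odd size.
Singletons are included, so for a multigraph this says both `δ > k` and `Φ > k`. -/
def IsCoverDense (k : ℕ) (I : ι → Finset α) : Prop :=
  ∀ U : Finset α, Odd #U → k * ((#U + 1) / 2) < #(edgesMeeting I U)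

/-- A set of odd size is tight if it attains the least value of `|E⁺(U)|` that
`IsCoverDense` allows. -/
def IsTight (k : ℕ) (I : ι → Finset α) (U : Finset α) : Prop :=
  Odd #U ∧ #(edgesMeeting I U) = k * ((#U + 1) / 2) + 1

@[simp]
lemma mem_edgesMeeting {e : ι} : e ∈ edgesMeeting I U ↔ ∃ v ∈ I e, v ∈ U := by
  simp [edgesMeeting]

lemma card_edgesMeeting_singleton (I : ι → Finset α) (v : α) :
    #(edgesMeeting I {v}) = incidenceDegree I v := by
  simp [edgesMeeting, incidenceDegree]

lemma IsCoverDense.lt_incidenceDegree (hI : IsCoverDense k I) (v : α) :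
    k < incidenceDegree I v := by
  simpa [card_edgesMeeting_singleton] using hI {v} (by simp)

lemma card_edgesMeeting_inter_add_card_edgesMeeting_union_le (I : ι → Finset α)
    (U T : Finset α) :
    #(edgesMeeting I (U ∩ T)) + #(edgesMeeting I (U ∪ T)) ≤
      #(edgesMeeting I U) + #(edgesMeeting I T) := by
  classical
  have hinter : edgesMeeting I (U ∩ T) ⊆ edgesMeeting I U ∩ edgesMeeting I T := by
    intro e; simp only [mem_inter, mem_edgesMeeting]; grind
  have hunion : edgesMeeting I (U ∪ T) = edgesMeeting I U ∪ edgesMeeting I T := by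
    ext e; simp only [mem_union, mem_edgesMeeting]; grind
  rw [hunion, ← card_inter_add_card_union (edgesMeeting I U)]
  gcongr

lemma card_edgesMeeting (I : ι → Finset α) (U : Finset α) :
    #(edgesMeeting I U) = ∑ e, min 1 #(I e ∩ U) := by
  rw [edgesMeeting, card_filter]
  refine sum_congr rfl fun e _ ↦ ?_
  have h : (∃ v ∈ I e, v ∈ U) ↔ 0 < #(I e ∩ U) := by
    simp [card_pos, Finset.Nonempty]
  simp only [h]
  split_ifs <;> omega

lemma sum_incidenceDegree (I : ι → Finset α) (U : Finset α) :
    ∑ v ∈ U, incidenceDegree I v = ∑ e, #(I e ∩ U) := by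
  simp only [incidenceDegree, card_filter]
  rw [sum_comm]
  refine sum_congr rfl fun e _ ↦ ?_
  rw [← card_filter, inter_comm, filter_mem_eq_inter]

lemma card_edgesMeeting_sdiff_add_sum_incidenceDegree_le (hI : ∀ e, #(I e) ≤ 2)
    (U T : Finset α) :
    #(edgesMeeting I (U \ T)) + #(edgesMeeting I (T \ U)) + ∑ v ∈ U ∩ T, incidenceDegree I v ≤
      #(edgesMeeting I U) + #(edgesMeeting I T) := by
  simp only [card_edgesMeeting, sum_incidenceDegree, ← sum_add_distrib]
  refine sum_le_sum fun e _ ↦ ?_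
  have card_split (A B : Finset α) : #(I e ∩ A) = #(I e ∩ (A \ B)) + #(I e ∩ (A ∩ B)) := by
    rw [← card_sdiff_add_card_inter (I e ∩ A) B, inter_sdiff_assoc, inter_assoc]
  have hU := card_split U T
  have hT := card_split T U
  have hle : #(I e ∩ (U \ T)) + #(I e ∩ T) ≤ 2 := by
    rw [← card_union_of_disjoint (by grind [Finset.disjoint_left])]
    exact (card_le_card (by grind)).trans (hI e)
  rw [inter_comm T U] at hT
  omega

/-- If `#(U ∩ T)` is even, then `U \ T` and `T \ U` have odd size and violate density, because the
vertices of `U ∩ T` have degree more than `k`, and `v` has even more. -/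
lemma IsTight.odd_card_inter (hrank : ∀ e, #(I e) ≤ 2) (hI : IsCoverDense k I) {v : α}
    (hv : k + 1 < incidenceDegree I v) (hU : IsTight k I U) (hT : IsTight k I T)
    (hvU : v ∈ U) (hvT : v ∈ T) : Odd #(U ∩ T) := by
  by_contra heven
  rw [Nat.not_odd_iff_even] at heven
  have hUT := card_sdiff_add_card_inter U T
  have hTU := card_sdiff_add_card_inter T U
  rw [inter_comm] at hTU
  obtain ⟨hUodd, hUcard⟩ := hU
  obtain ⟨hTodd, hTcard⟩ := hT
  have hUdense := hI (U \ T) (by grind)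
  have hTdense := hI (T \ U) (by grind)
  have hsum : (k + 1) * #(U ∩ T) < ∑ w ∈ U ∩ T, incidenceDegree I w := by
    rw [mul_comm, ← smul_eq_mul, ← sum_const]
    exact sum_lt_sum (fun w _ ↦ hI.lt_incidenceDegree w) ⟨v, by simp [hvU, hvT], hv⟩
  have hhalves : (#U + 1) / 2 + (#T + 1) / 2 =
      (#(U \ T) + 1) / 2 + (#(T \ U) + 1) / 2 + #(U ∩ T) := by grind
  have := card_edgesMeeting_sdiff_add_sum_incidenceDegree_le hrank U T
  have := congrArg (k * ·) hhalves
  simp only [mul_add] at this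
  linarith

lemma IsTight.inter (hI : IsCoverDense k I) (hU : IsTight k I U) (hT : IsTight k I T)
    (hodd : Odd #(U ∩ T)) : IsTight k I (U ∩ T) := by
  obtain ⟨hUodd, hUcard⟩ := hU
  obtain ⟨hTodd, hTcard⟩ := hT
  have hcard := card_union_add_card_inter U T
  have hinter := hI _ hodd
  have hunion := hI (U ∪ T) (by grind)
  have hhalves : (#(U ∩ T) + 1) / 2 + (#(U ∪ T) + 1) / 2 = (#U + 1) / 2 + (#T + 1) / 2 := by grind
  have := congrArg (k * ·) hhalves
  simp only [mul_add] at this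
  have := card_edgesMeeting_inter_add_card_edgesMeeting_union_le I U T
  exact ⟨hodd, by omega⟩

/-- Otherwise removing `v` and one more vertex from `T` would destroy at least `k + 2` of the edges
meeting `T`, too many for a dense hypergraph. -/
lemma IsTight.exists_edge_meeting_erase (hI : IsCoverDense k I) {v : α}
    (hv : k + 1 < incidenceDegree I v) (hT : IsTight k I T) (hvT : v ∈ T) :
    ∃ e, v ∈ I e ∧ ∃ w ∈ I e, w ∈ T ∧ w ≠ v := by
  classical
  by_contra! hno
  obtain ⟨hodd, hcard⟩ := hT
  obtain ⟨x, hxT, hxv⟩ : ∃ x ∈ T, x ≠ v := by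
    by_contra! h
    obtain rfl : T = {v} := by grind
    simp [card_edgesMeeting_singleton] at hcard
    omega
  set S := (T.erase v).erase x
  have hS : #S + 2 = #T := by
    rw [← card_erase_add_one hvT, ← card_erase_add_one (mem_erase.mpr ⟨hxv, hxT⟩)]
  have hdense := hI S (by grind)
  have hdisj : Disjoint (edgesMeeting I S) (edgesMeeting I {v}) := by
    simp only [Finset.disjoint_left, mem_edgesMeeting]; grind
  have hsub : edgesMeeting I S ∪ edgesMeeting I {v} ⊆ edgesMeeting I T := by
    intro e; simp only [mem_union, mem_edgesMeeting]; grind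
  have hle := card_le_card hsub
  rw [card_union_of_disjoint hdisj, card_edgesMeeting_singleton, hcard, ← hS,
    show (#S + 2 + 1) / 2 = (#S + 1) / 2 + 1 by omega, mul_add] at hle
  omega

/-- Removing `v` from the edge `e` destroys density by minimality, and it does so at a set that `e`
no longer meets. -/
lemma exists_isTight_of_minimal_isCoverDense (hI : Minimal (IsCoverDense k) I) {v : α} {e : ι}
    (hve : v ∈ I e) : ∃ U, IsTight k I U ∧ v ∈ U ∧ ∀ w ∈ I e, w ∈ U → w = v := by
  classical
  set J := Function.update I e ((I e).erase v)
  have hJI : J < I := update_lt_self_iff.mpr (erase_ssubset hve)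
  obtain ⟨U, hodd, hle⟩ : ∃ U : Finset α, Odd #U ∧ #(edgesMeeting J U) ≤ k * ((#U + 1) / 2) := by
    simpa [IsCoverDense] using hI.not_prop_of_lt hJI
  have hdense := hI.prop U hodd
  have hsub : (edgesMeeting I U).erase e ⊆ edgesMeeting J U := by
    intro f
    simp only [mem_erase, mem_edgesMeeting]
    rintro ⟨hfe, hf⟩
    rwa [show J f = I f from Function.update_of_ne hfe _ _]
  have heU : e ∉ edgesMeeting J U := by
    intro he
    have := card_le_card ((erase_subset_iff_of_mem he).mp hsub)
    omega
  have honly : ∀ w ∈ I e, w ∈ U → w = v := by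
    simp only [mem_edgesMeeting, J, Function.update_self] at heU
    grind
  have heI : e ∈ edgesMeeting I U := by
    by_contra he
    have := card_le_card (erase_eq_of_notMem he ▸ hsub)
    omega
  have hcard := card_le_card hsub
  rw [card_erase_of_mem heI] at hcard
  refine ⟨U, ⟨hodd, by omega⟩, ?_, honly⟩
  obtain ⟨w, hwe, hwU⟩ := mem_edgesMeeting.mp heI
  exact honly w hwe hwU ▸ hwU

/-- At a vertex of larger degree some edge `e` would meet a smallest tight set `T` in another
vertex, yet `T` is contained in every tight set through `v`. -/
theorem incidenceDegree_eq_of_minimal_isCoverDense (hrank : ∀ e, #(I e) ≤ 2)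
    (hI : Minimal (IsCoverDense k) I) (v : α) : incidenceDegree I v = k + 1 := by
  have hdense := hI.prop
  by_contra hne
  have hv : k + 1 < incidenceDegree I v := by
    have := hdense.lt_incidenceDegree v
    omega
  obtain ⟨e₀, he₀⟩ := card_pos.mp (show 0 < incidenceDegree I v by omega)
  obtain ⟨T₀, hT₀, hvT₀, -⟩ := exists_isTight_of_minimal_isCoverDense hI (by simpa using he₀)
  obtain ⟨T, ⟨hT, hvT⟩, hmin⟩ :=
    exists_minimal_of_wellFoundedLT (fun T ↦ IsTight k I T ∧ v ∈ T) ⟨T₀, hT₀, hvT₀⟩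
  obtain ⟨e, hve, w, hwe, hwT, hwv⟩ := hT.exists_edge_meeting_erase hdense hv hvT
  obtain ⟨U, hU, hvU, honly⟩ := exists_isTight_of_minimal_isCoverDense hI hve
  have hUT : IsTight k I (U ∩ T) :=
    hU.inter hdense hT (hU.odd_card_inter hrank hdense hv hT hvU hvT)
  have hTU : T ≤ U ∩ T := hmin ⟨hUT, mem_inter.mpr ⟨hvU, hvT⟩⟩ inter_subset_right
  exact hwv (honly w hwe (mem_inter.mp (hTU hwT)).1)

end Hypergraph

section Recoloring

variable {α ι κ : Type*}

lemma exists_injective_forall_mem_of_le_card [Fintype α] [DecidableEq ι] {r : ℕ} (hr : 0 < r)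
    {t : α → Finset ι} (ht : ∀ v, r ≤ #(t v)) (hdeg : ∀ e, #{v | e ∈ t v} ≤ r) :
    ∃ g : α → ι, Function.Injective g ∧ ∀ v, g v ∈ t v := by
  refine (all_card_le_biUnion_card_iff_exists_injective t).mp fun s ↦ ?_
  refine Nat.le_of_mul_le_mul_right ?_ hr
  refine card_mul_le_card_mul (fun v e ↦ e ∈ t v) (fun v hv ↦ ?_) fun e _ ↦ ?_
  · refine (ht v).trans (card_le_card fun e he ↦ ?_)
    exact mem_filter.mpr ⟨mem_biUnion.mpr ⟨v, hv, he⟩, he⟩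
  · exact (card_le_card (filter_subset_filter _ (subset_univ s))).trans (hdeg e)

lemma exists_forall_ne_exists_eq_of_injOn [Fintype κ] [Nonempty κ] {c : ι → κ} {s : Finset ι}
    (hc : Set.InjOn c s) (hs : Fintype.card κ ≤ #s + 1) :
    ∃ m, ∀ i ≠ m, ∃ e ∈ s, c e = i := by
  classical
  have hcompl : #(s.image c)ᶜ ≤ 1 := by
    rw [card_compl, card_image_of_injOn hc]
    omega
  obtain ⟨m, hm⟩ := card_le_one_iff_subset_singleton.mp hcompl
  refine ⟨m, fun i hi ↦ ?_⟩
  by_contra hne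
  exact hi (mem_singleton.mp (hm (by simpa using hne)))

/-- A vertex missing a color of `κ` is on edges of both spare colors. By Hall's theorem these
vertices have distinct representatives among the spare edges, which take the missing colors. -/
lemma exists_coverColoring_of_forall_ne [Finite α] [Finite ι] [Nonempty κ]
    {I : ι → Finset α} (hrank : ∀ e, #(I e) ≤ 2) (c : ι → κ ⊕ Fin 2)
    (hc : ∀ v, ∃ m, ∀ i ≠ m, ∃ e, v ∈ I e ∧ c e = i) :
    ∃ c' : ι → κ, ∀ v i, ∃ e, v ∈ I e ∧ c' e = i := by
  classical
  have := Fintype.ofFinite α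
  have := Fintype.ofFinite ι
  choose m hm using hc
  let t (v : {v // (m v).isLeft}) : Finset ι := {e | v.1 ∈ I e ∧ (c e).isRight}
  have ht (v) : 2 ≤ #(t v) := by
    have hspare (j : Fin 2) : ∃ e, v.1 ∈ I e ∧ c e = .inr j :=
      hm v _ fun h ↦ by simpa [← h] using v.2
    choose e he hce using hspare
    have hinj : Function.Injective e := fun i j h ↦ by
      simpa [hce] using congrArg c h
    calc 2 = #(univ.image e) := by rw [card_image_of_injective _ hinj, card_univ, Fintype.card_fin]
      _ ≤ #(t v) := card_le_card fun f hf ↦ by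
        obtain ⟨j, -, rfl⟩ := mem_image.mp hf
        simp [t, he, hce]
  have hdeg (e) : #{v | e ∈ t v} ≤ 2 := by
    refine (card_le_card_of_injOn Subtype.val (fun v hv ↦ ?_) Subtype.val_injective.injOn).trans
      (hrank e)
    simp only [t, coe_filter, mem_filter, mem_univ, true_and, Set.mem_ofPred_eq] at hv
    exact hv.1
  obtain ⟨g, hg, hgt⟩ := exists_injective_forall_mem_of_le_card two_pos ht hdeg
  let recolor := Function.extend g (fun v ↦ (m v).getLeft v.2) fun _ ↦ Classical.arbitrary κ
  refine ⟨fun e ↦ (c e).elim id fun _ ↦ recolor e, fun v i ↦ ?_⟩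
  by_cases hi : m v = .inl i
  · let w : {v // (m v).isLeft} := ⟨v, by simp [hi]⟩
    obtain ⟨hvg, hright⟩ : v ∈ I (g w) ∧ (c (g w)).isRight := by simpa [t, w] using hgt w
    obtain ⟨j, hj⟩ := Sum.isRight_iff.mp hright
    exact ⟨g w, hvg, by simp [hj, recolor, hg.extend_apply, w, hi]⟩
  · obtain ⟨e, he, hce⟩ := hm v (.inl i) (Ne.symm hi)
    exact ⟨e, he, by simp [hce]⟩

end Recoloring

section Multigraph

variable {W F : Type}

lemma edgesMeeting_toFinset [Fintype W] [DecidableEq W] [Fintype F] (ends : F → Sym2 W)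
    (U : Finset W) : edgesMeeting (fun e ↦ (ends e).toFinset) U = edgesPlus ends U := by
  ext e
  simp [edgesPlus]

lemma incidenceDegree_toFinset [DecidableEq W] [Fintype F] (ends : F → Sym2 W) (v : W) :
    incidenceDegree (fun e ↦ (ends e).toFinset) v = mDegree ends v := by
  simp [incidenceDegree, mDegree]

lemma card_edgesIn_add_card_edgesPlus [Fintype W] [DecidableEq W] [Fintype F]
    {ends : F → Sym2 W} (hG : Loopless ends) (U : Finset W) :
    #(edgesIn ends U) + #(edgesPlus ends U) = ∑ v ∈ U, mDegree ends v := by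
  simp only [← edgesMeeting_toFinset, ← incidenceDegree_toFinset, card_edgesMeeting,
    sum_incidenceDegree, edgesIn, card_filter]
  rw [← sum_add_distrib]
  refine sum_congr rfl fun e _ ↦ ?_
  have htwo : #(ends e).toFinset = 2 := Sym2.card_toFinset_of_not_isDiag _ (hG e)
  split_ifs with h
  · have hinter : (ends e).toFinset ∩ U = (ends e).toFinset :=
      inter_eq_left.mpr fun v hv ↦ h v (Sym2.mem_toFinset.mp hv)
    simp [hinter, htwo]
  · have hssub : (ends e).toFinset ∩ U ⊂ (ends e).toFinset :=
      inter_subset_left.ssubset_of_ne fun heq ↦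
        h fun v hv ↦ inter_eq_left.mp heq (Sym2.mem_toFinset.mpr hv)
    have := card_lt_card hssub
    omega

lemma edgesIn_subset_edgesPlus [Fintype W] [DecidableEq W] [Fintype F] (ends : F → Sym2 W)
    (U : Finset W) : edgesIn ends U ⊆ edgesPlus ends U := by
  intro e
  simp only [edgesIn, edgesPlus, mem_filter, mem_univ, true_and]
  exact fun h ↦ ⟨_, Sym2.out_fst_mem _, h _ (Sym2.out_fst_mem _)⟩

lemma density_le_of_forall_isOddSet [Fintype W] [DecidableEq W] [Fintype F] {ends : F → Sym2 W}
    {c : ℕ} (h : ∀ U, IsOddSet U → 2 * #(edgesIn ends U) + c ≤ c * #U) : density ends ≤ c := by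
  refine Real.sSup_le ?_ c.cast_nonneg
  rintro _ ⟨U, hU, rfl⟩
  have hU3 : (3 : ℝ) ≤ #U := by exact_mod_cast hU.1
  have hc : (2 * #(edgesIn ends U) + c : ℝ) ≤ c * #U := by exact_mod_cast h U hU
  rw [div_le_iff₀ (by linarith)]
  linarith

lemma isCoverDense_of_lt_minDegree_of_lt_codensity [Fintype W] [DecidableEq W] [Fintype F]
    {ends : F → Sym2 W} {k : ℕ} (hδ : k < minDegree ends) (hΦ : (k : ℝ) < codensity ends) :
    IsCoverDense k fun e ↦ (ends e).toFinset := by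
  intro U hU
  by_cases h3 : 3 ≤ #U
  · have hle : codensity ends ≤ 2 * #(edgesPlus ends U) / ((#U : ℝ) + 1) := by
      refine csInf_le ⟨0, ?_⟩ ⟨U, ⟨h3, hU⟩, rfl⟩
      rintro _ ⟨T, _, rfl⟩
      positivity
    have hlt := hΦ.trans_le hle
    rw [lt_div_iff₀ (by positivity)] at hlt
    have hlt' : k * (#U + 1) < 2 * #(edgesPlus ends U) := by exact_mod_cast hlt
    obtain ⟨m, hm⟩ := hU
    rw [edgesMeeting_toFinset, hm, show (2 * m + 1 + 1) / 2 = m + 1 by omega]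
    rw [hm] at hlt'
    linarith
  · obtain ⟨v, rfl⟩ := card_eq_one.mp (show #U = 1 by grind)
    rw [card_edgesMeeting_singleton, incidenceDegree_toFinset]
    simpa using hδ.trans_le (Nat.sInf_le ⟨v, rfl⟩)

lemma exists_isProperEdgeColoring_of_chromaticIndex_le [Finite F] {ends : F → Sym2 W} {n : ℕ}
    (h : chromaticIndex ends ≤ n) : ∃ c : F → Fin n, IsProperEdgeColoring ends c := by
  have := Fintype.ofFinite F
  have hne : {k : ℕ | ∃ c : F → Fin k, IsProperEdgeColoring ends c}.Nonempty :=
    ⟨_, Fintype.equivFin F, fun _ _ _ _ _ h ↦ (Fintype.equivFin F).injective h⟩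
  obtain ⟨c, hc⟩ := Nat.sInf_mem hne
  exact ⟨fun e ↦ (c e).castLE h, fun v e f he hf hef ↦
    hc v e f he hf (Fin.castLE_injective h hef)⟩

lemma IsCoverColoring.le_coverIndex [Nonempty W] [Finite F] {ends : F → Sym2 W} {k : ℕ}
    {c : F → Fin k} (hc : IsCoverColoring ends c) : k ≤ coverIndex ends := by
  refine le_csSup ⟨Nat.card F, ?_⟩ ⟨c, hc⟩
  rintro n ⟨d, hd⟩
  have hsurj : Function.Surjective d := fun i ↦
    (hd (Classical.arbitrary W) i).imp fun _ h ↦ h.2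
  simpa using Nat.card_le_card_of_surjective d hsurj

end Multigraph

section PendantExtension

variable {W P F : Type} {J : F → Finset W} {H : F → Sym2 (W ⊕ P)} {k : ℕ}

/-- A loopless multigraph `H` is a pendant extension of a hypergraph `J` if its edges are those
of `J`, filled up to size two with new vertices, each of which lies on at most one edge. -/
structure IsPendantExtension (J : F → Finset W) (H : F → Sym2 (W ⊕ P)) : Prop where
  loopless : Loopless H
  inl_mem_iff : ∀ e v, .inl v ∈ H e ↔ v ∈ J e
  eq_of_inr_mem : ∀ p e f, .inr p ∈ H e → .inr p ∈ H f → e = f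

lemma exists_isPendantExtension (hJ : ∀ e, #(J e) ≤ 2) :
    ∃ H : F → Sym2 (W ⊕ F × Bool), IsPendantExtension J H := by
  classical
  have hedge (e : F) : ∃ s : Sym2 (W ⊕ F × Bool), ¬ s.IsDiag ∧ (∀ v, .inl v ∈ s ↔ v ∈ J e) ∧
      ∀ p, .inr p ∈ s → p.1 = e := by
    obtain h | h | h : #(J e) = 0 ∨ #(J e) = 1 ∨ #(J e) = 2 := by have := hJ e; omega
    · exact ⟨s(.inr (e, true), .inr (e, false)), by simp_all⟩
    · obtain ⟨a, ha⟩ := card_eq_one.mp h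
      exact ⟨s(.inl a, .inr (e, true)), by simp_all⟩
    · obtain ⟨a, b, hab, hJe⟩ := card_eq_two.mp h
      exact ⟨s(.inl a, .inl b), by simp_all⟩
  choose H hloopless hinl hinr using hedge
  exact ⟨H, hloopless, hinl, fun p e f he hf ↦ (hinr e p he).symm.trans (hinr f p hf)⟩

namespace IsPendantExtension

variable [DecidableEq W] [DecidableEq P] [Fintype F]

lemma mDegree_inl (hH : IsPendantExtension J H) (v : W) :
    mDegree H (.inl v) = incidenceDegree J v := by
  simp only [mDegree, incidenceDegree, hH.inl_mem_iff]

lemma mDegree_inr_le (hH : IsPendantExtension J H) (p : P) : mDegree H (.inr p) ≤ 1 := by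
  rw [mDegree, card_le_one]
  simpa using fun e he f hf ↦ hH.eq_of_inr_mem p e f he hf

lemma maxDegree_le (hH : IsPendantExtension J H) (hJ : ∀ v, incidenceDegree J v ≤ k + 1) :
    maxDegree H ≤ k + 1 := by
  refine csSup_le' ?_
  rintro _ ⟨v | p, rfl⟩
  · exact (hH.mDegree_inl v).trans_le (hJ v)
  · exact (hH.mDegree_inr_le p).trans (Nat.le_add_left 1 k)

lemma sum_mDegree_le (hH : IsPendantExtension J H) (hJ : ∀ v, incidenceDegree J v ≤ k + 1)
    (U : Finset (W ⊕ P)) : ∑ w ∈ U, mDegree H w ≤ (k + 1) * #U.toLeft + #U.toRight := by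
  rw [sum_sum_eq_sum_toLeft_add_sum_toRight]
  gcongr
  · simpa [hH.mDegree_inl, mul_comm] using sum_le_card_nsmul U.toLeft _ (k + 1) fun v _ ↦ hJ v
  · simpa using sum_le_card_nsmul U.toRight _ 1 fun p _ ↦ hH.mDegree_inr_le p

variable [Fintype W] [Fintype P]

lemma card_edgesMeeting_toLeft_le (hH : IsPendantExtension J H) (U : Finset (W ⊕ P)) :
    #(edgesMeeting J U.toLeft) ≤ #(edgesPlus H U) := by
  refine card_le_card fun e ↦ ?_
  simp only [mem_edgesMeeting, edgesPlus, mem_filter, mem_univ, true_and]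
  rintro ⟨v, hv, hvU⟩
  exact ⟨.inl v, (hH.inl_mem_iff e v).mpr hv, mem_toLeft.mp hvU⟩

/-- Both cases use `|E(U)| = ∑ deg - |E⁺(U)|`. If `U` has an odd number of old vertices, density
bounds `|E⁺(U)|` from below; otherwise `|E⁺(U)| ≥ |E(U)|` is enough. -/
lemma density_le (hH : IsPendantExtension J H) (hdense : IsCoverDense k J)
    (hJ : ∀ v, incidenceDegree J v ≤ k + 1) : density H ≤ (k + 2 : ℕ) := by
  refine density_le_of_forall_isOddSet fun U ⟨hU3, hU⟩ ↦ ?_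
  have hsum := hH.sum_mDegree_le hJ U
  rw [← card_edgesIn_add_card_edgesPlus hH.loopless] at hsum
  rw [← card_toLeft_add_card_toRight] at hU3 hU ⊢
  rcases Nat.even_or_odd #U.toLeft with hleft | hleft
  · have hplus := card_le_card (edgesIn_subset_edgesPlus H U)
    have hright : 0 < #U.toRight := Odd.pos (by grind)
    have : k + 2 ≤ #U.toLeft + (k + 1) * #U.toRight := by
      rcases Nat.eq_zero_or_pos #U.toLeft with hzero | hpos
      · rw [hzero, zero_add] at hU3 ⊢
        nlinarith
      · have : 2 ≤ #U.toLeft := by grind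
        nlinarith
    linarith
  · have hplus := (hdense _ hleft).trans_le (hH.card_edgesMeeting_toLeft_le U)
    obtain ⟨m, hm⟩ := hleft
    rw [hm, show (2 * m + 1 + 1) / 2 = m + 1 by omega] at hplus
    rw [hm] at hsum ⊢
    nlinarith

end IsPendantExtension

end PendantExtension

/-- The Goldberg–Seymour conjecture `χ' ≤ max {Δ + 1, ⌈Γ⌉}`. -/
def GoldbergSeymour : Prop :=
  ∀ (W F : Type) [Fintype W] [DecidableEq W] [Fintype F] (ends : F → Sym2 W), Loopless ends →
    (chromaticIndex ends : ℤ) ≤ max ((maxDegree ends : ℤ) + 1) ⌈density ends⌉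

section CoverIndex

variable {W F : Type} [Fintype W] [DecidableEq W] [Fintype F]

theorem GoldbergSeymour.chromaticIndex_le (GS : GoldbergSeymour) {ends : F → Sym2 W}
    (hG : Loopless ends) {n : ℕ} (hΔ : maxDegree ends + 1 ≤ n) (hΓ : density ends ≤ n) :
    chromaticIndex ends ≤ n := by
  have hceil : ⌈density ends⌉ ≤ (n : ℤ) := Int.ceil_le.mpr (by exact_mod_cast hΓ)
  exact_mod_cast (GS W F ends hG).trans (max_le (by exact_mod_cast hΔ) hceil)

theorem IsCoverDense.exists_coverColoring {W F : Type} [Finite W] [DecidableEq W]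
    [Fintype F] (GS : GoldbergSeymour) {k : ℕ} [NeZero k] {I : F → Finset W}
    (hrank : ∀ e, #(I e) ≤ 2) (hI : IsCoverDense k I) :
    ∃ c : F → Fin k, ∀ v i, ∃ e, v ∈ I e ∧ c e = i := by
  classical
  have := Fintype.ofFinite W
  obtain ⟨J, hJI, hJ⟩ := exists_minimal_le_of_wellFoundedLT (IsCoverDense k) I hI
  have hJrank (e) : #(J e) ≤ 2 := (card_le_card (hJI e)).trans (hrank e)
  have hdeg := incidenceDegree_eq_of_minimal_isCoverDense hJrank hJ
  obtain ⟨H, hH⟩ := exists_isPendantExtension hJrank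
  have hχ : chromaticIndex H ≤ k + 2 := GS.chromaticIndex_le hH.loopless
    (Nat.succ_le_succ (hH.maxDegree_le fun v ↦ (hdeg v).le))
    (hH.density_le hJ.prop fun v ↦ (hdeg v).le)
  obtain ⟨c, hc⟩ := exists_isProperEdgeColoring_of_chromaticIndex_le hχ
  have hmissing (v) : ∃ m, ∀ i ≠ m, ∃ e, v ∈ J e ∧ finSumFinEquiv.symm (c e) = i := by
    have hinj : Set.InjOn (finSumFinEquiv.symm ∘ c) ({e | v ∈ J e} : Finset F) := by
      refine finSumFinEquiv.symm.injective.injOn.comp ?_ (Set.mapsTo_univ _ _)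
      intro e he f hf
      exact hc (.inl v) e f ((hH.inl_mem_iff e v).mpr (by simpa using he))
        ((hH.inl_mem_iff f v).mpr (by simpa using hf))
    have hcard : k + 1 ≤ #{e | v ∈ J e} := (hdeg v).ge
    simpa using exists_forall_ne_exists_eq_of_injOn hinj (by simpa using hcard)
  obtain ⟨c', hc'⟩ := exists_coverColoring_of_forall_ne hJrank _ hmissing
  exact ⟨c', fun v i ↦ (hc' v i).imp fun e he ↦ ⟨hJI e he.1, he.2⟩⟩

theorem le_coverIndex_of_lt_minDegree_of_lt_codensity (GS : GoldbergSeymour)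
    (ends : F → Sym2 W) {z : ℤ} (hδ : z < minDegree ends) (hΦ : z < codensity ends) :
    z ≤ coverIndex ends := by
  rcases le_or_gt z 0 with hz | hz
  · exact hz.trans (Int.natCast_nonneg _)
  lift z to ℕ using hz.le
  have : NeZero z := ⟨by omega⟩
  have : Nonempty W := by
    by_contra hW
    rw [not_nonempty_iff] at hW
    simp [minDegree, Set.range_eq_empty] at hδ
    omega
  have hrank (e) : #(ends e).toFinset ≤ 2 := by
    rw [Sym2.card_toFinset]
    split_ifs <;> omega
  have hdense := isCoverDense_of_lt_minDegree_of_lt_codensity (ends := ends)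
    (by exact_mod_cast hδ) (by exact_mod_cast hΦ)
  obtain ⟨c, hc⟩ := hdense.exists_coverColoring GS hrank
  have hcover : IsCoverColoring ends c := by simpa [IsCoverColoring] using hc
  exact_mod_cast hcover.le_coverIndex

theorem stmt_0_general (GS : GoldbergSeymour) (ends : F → Sym2 W) :
    (¬ (∃ n : ℤ, codensity ends = n) →
      min ((minDegree ends : ℤ) - 1) ⌊codensity ends⌋ ≤ coverIndex ends) ∧
    ((∃ n : ℤ, codensity ends = n) →
      min ((minDegree ends : ℤ) - 2) (⌊codensity ends⌋ - 1) ≤ coverIndex ends) := by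
  have hfloor := Int.floor_le (codensity ends)
  constructor
  · intro hΦ
    refine le_coverIndex_of_lt_minDegree_of_lt_codensity GS ends (by omega) ?_
    calc ((min ((minDegree ends : ℤ) - 1) ⌊codensity ends⌋ : ℤ) : ℝ)
      _ ≤ ⌊codensity ends⌋ := by exact_mod_cast min_le_right _ _
      _ < codensity ends := lt_of_le_of_ne hfloor fun h ↦ hΦ ⟨_, h.symm⟩
  · rintro -
    refine le_coverIndex_of_lt_minDegree_of_lt_codensity GS ends (by omega) ?_
    calc ((min ((minDegree ends : ℤ) - 2) (⌊codensity ends⌋ - 1) : ℤ) : ℝ)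
      _ ≤ (⌊codensity ends⌋ - 1 : ℤ) := by exact_mod_cast min_le_right _ _
      _ < codensity ends := by push_cast; linarith

end CoverIndex

/-- Assuming the Goldberg–Seymour conjecture, every finite loopless multigraph `G`
satisfies `ξ(G) ≥ min{δ(G)−1, ⌊Φ(G)⌋}` if `Φ(G)` is not an integer, and
`ξ(G) ≥ min{δ(G)−2, ⌊Φ(G)⌋−1}` if `Φ(G)` is an integer. -/
theorem stmt_0
    (GS : ∀ (W F : Type) [Fintype W] [DecidableEq W] [Fintype F]
      (ends' : F → Sym2 W), Loopless ends' →
      (chromaticIndex ends' : ℤ) ≤ max ((maxDegree ends' : ℤ) + 1) ⌈density ends'⌉)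
    {V E : Type} [Fintype V] [DecidableEq V] [Fintype E]
    (ends : E → Sym2 V) (hG : Loopless ends) :
    (¬ (∃ n : ℤ, codensity ends = (n : ℝ)) →
      min ((minDegree ends : ℤ) - 1) ⌊codensity ends⌋ ≤ (coverIndex ends : ℤ)) ∧
    ((∃ n : ℤ, codensity ends = (n : ℝ)) →
      min ((minDegree ends : ℤ) - 2) (⌊codensity ends⌋ - 1) ≤ (coverIndex ends : ℤ)) := by
  exact stmt_0_general GS ends
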